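/- Let n ≥ 1, 1/2 < s < 1, μ > 0. Let g : ℝⁿ × ℝ → ℝ satisfy |g(x,t) − g(y,t)| ≤ Lip(g)·|x−y| for all x, y ∈ ℝⁿ uniformly in t ∈ ℝ, and g(x,t₁) − g(x,t₂) ≥ μ(t₁ − t₂) for all x and all t₁ ≥ t₂. Let φ : ℝⁿ → ℝ be Lipschitz continuous with constant Lip(φ). Let v : ℝⁿ → ℝ be continuous, suppose for every x ∈ ℝⁿ and every admissible A the function y ↦ δ(v,x,y)/|A⁻¹y|^{n+2s} is Lebesgue integrable on ℝⁿ, suppose inf_A L_A v(x) = g(x, v(x)) for every x, and suppose (v − φ)(x) → 0 as |x| → ∞. Then for all x, y ∈ ℝⁿ, |v(x) − v(y)| ≤ max{ Lip(g)/μ, Lip(φ) }·|x − y|. -/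

import Mathlib

open MeasureTheory

noncomputable def surfOmega (k : ℕ) : ℝ := 2 * Real.pi ^ ((k : ℝ) / 2) / Real.Gamma ((k : ℝ) / 2)

noncomputable def mu1 (s L C : ℝ) : ℝ := L ^ (2 - 2 * s) * (C / 2) ^ (2 * s - 1) / (2 * s - 1)

noncomputable def C1 (n : ℕ) (s L C : ℝ) : ℝ :=
  (Real.sqrt Real.pi * Real.Gamma (((n : ℝ) - 1) / 2 + s) / Real.Gamma ((n : ℝ) / 2 + s)) *
    (mu1 s L C * surfOmega (n - 1) / 2)

noncomputable def C2 (n : ℕ) (s : ℝ) : ℝ :=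
  surfOmega (n - 1) * Real.Gamma (((n : ℝ) - 1) / 2) * Real.Gamma (s + 1 / 2) /
    (2 * Real.Gamma ((n : ℝ) / 2 + s))

noncomputable def mu0 (n : ℕ) (s L C η₀ : ℝ) : ℝ :=
  C1 n s L C ^ (1 - (n : ℝ)) * (C2 n s)⁻¹ * (η₀ / 2) ^ (n : ℝ)

/-- Second-order increment `δ(u,x,y) = u(x+y) + u(x-y) - 2u(x)`. -/
noncomputable def delta2 {n : ℕ} (u : EuclideanSpace ℝ (Fin n) → ℝ)
    (x y : EuclideanSpace ℝ (Fin n)) : ℝ :=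
  u (x + y) + u (x - y) - 2 * u x

/-- Integrand `δ(u,x,y)/|A⁻¹ y|^(n+2s)`. -/
noncomputable def kernelA {n : ℕ} (s : ℝ) (A : Matrix (Fin n) (Fin n) ℝ)
    (u : EuclideanSpace ℝ (Fin n) → ℝ) (x y : EuclideanSpace ℝ (Fin n)) : ℝ :=
  delta2 u x y /
    ‖(EuclideanSpace.equiv (Fin n) ℝ).symm (A⁻¹.mulVec (EuclideanSpace.equiv (Fin n) ℝ y))‖ ^
      ((n : ℝ) + 2 * s)

/-- The linear operator `L_A u(x) = (1/2) ∫ δ(u,x,y)/|A⁻¹ y|^(n+2s) dy`. -/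
noncomputable def LA {n : ℕ} (s : ℝ) (A : Matrix (Fin n) (Fin n) ℝ)
    (u : EuclideanSpace ℝ (Fin n) → ℝ) (x : EuclideanSpace ℝ (Fin n)) : ℝ :=
  (1 / 2) * ∫ y, kernelA s A u x y


open Filter

section MatrixPart
open scoped MatrixOrder Matrix

theorem aux_sqrt {n : ℕ} (M : Matrix (Fin n) (Fin n) ℝ) (hM : M.PosDef) (hd : M.det = 1) :
    ∃ A : Matrix (Fin n) (Fin n) ℝ, A.PosDef ∧ A.det = 1 ∧
      ∀ x : Fin n → ℝ, (A⁻¹ *ᵥ x) ⬝ᵥ (A⁻¹ *ᵥ x) = x ⬝ᵥ (M *ᵥ x) := by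
  have h0 : 0 ≤ M := hM.posSemidef.nonneg
  set R := CFC.sqrt M with hR
  have hRR : R * R = M := CFC.sqrt_mul_sqrt_self M h0
  have hRs : R.PosSemidef := Matrix.nonneg_iff_posSemidef.1 (CFC.sqrt_nonneg M)
  have hdet : R.det * R.det = 1 := by rw [← Matrix.det_mul, hRR, hd]
  have hne : R.det ≠ 0 := by intro h; rw [h] at hdet; simp at hdet
  have hRd : R.PosDef := hRs.posDef_iff_det_ne_zero.2 hne
  have hpos := hRd.det_pos
  have h1 : R.det = 1 := by nlinarith
  have hu : IsUnit R.det := by rw [h1]; exact isUnit_one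
  refine ⟨R⁻¹, hRd.inv, ?_, ?_⟩
  · rw [Matrix.det_nonsing_inv, h1]; simp
  · intro x
    rw [Matrix.nonsing_inv_nonsing_inv R hu]
    have hsym : Rᵀ = R := by
      have := hRd.isHermitian.eq
      rwa [Matrix.conjTranspose_eq_transpose_of_trivial] at this
    rw [Matrix.dotProduct_mulVec, ← Matrix.mulVec_transpose, hsym, Matrix.mulVec_mulVec, hRR,
      dotProduct_comm]

theorem aux_Q {n : ℕ} (hn : 1 ≤ n) (w : Fin n → ℝ) :
    ((1 + w ⬝ᵥ w) • (1 : Matrix (Fin n) (Fin n) ℝ) - Matrix.vecMulVec w w).PosDef ∧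
    ((1 + w ⬝ᵥ w) • (1 : Matrix (Fin n) (Fin n) ℝ) - Matrix.vecMulVec w w).det
      = (1 + w ⬝ᵥ w) ^ (n - 1) ∧
    ∀ z : Fin n → ℝ, z ⬝ᵥ (((1 + w ⬝ᵥ w) • (1 : Matrix (Fin n) (Fin n) ℝ) -
      Matrix.vecMulVec w w) *ᵥ z) = (1 + w ⬝ᵥ w) * (z ⬝ᵥ z) - (w ⬝ᵥ z) ^ 2 := by
  have hw : 0 ≤ w ⬝ᵥ w := by
    simp only [dotProduct]; exact Finset.sum_nonneg fun i _ => mul_self_nonneg _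
  have hform : ∀ z : Fin n → ℝ, z ⬝ᵥ (((1 + w ⬝ᵥ w) • (1 : Matrix (Fin n) (Fin n) ℝ) -
      Matrix.vecMulVec w w) *ᵥ z) = (1 + w ⬝ᵥ w) * (z ⬝ᵥ z) - (w ⬝ᵥ z) ^ 2 := by
    intro z
    rw [Matrix.sub_mulVec, Matrix.smul_mulVec, Matrix.one_mulVec, Matrix.vecMulVec_mulVec,
      dotProduct_sub, dotProduct_smul]
    simp [dotProduct_comm z w]
    ring
  refine ⟨?_, ?_, hform⟩
  · apply Matrix.PosDef.of_dotProduct_mulVec_pos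
    · ext i j
      simp [Matrix.vecMulVec_apply, Matrix.one_apply, eq_comm, mul_comm]
    · intro z hz
      rw [star_trivial, hform]
      have hcs : (w ⬝ᵥ z) ^ 2 ≤ (w ⬝ᵥ w) * (z ⬝ᵥ z) := by
        have := Finset.sum_mul_sq_le_sq_mul_sq Finset.univ w z
        simpa [dotProduct, sq] using this
      have hzz : 0 < z ⬝ᵥ z := by
        have h0 : 0 ≤ z ⬝ᵥ z := by
          simp only [dotProduct]; exact Finset.sum_nonneg fun i _ => mul_self_nonneg _
        refine lt_of_le_of_ne h0 fun h => hz ?_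
        exact dotProduct_self_eq_zero.1 h.symm
      nlinarith
  · set c := 1 + w ⬝ᵥ w with hc
    have hc0 : c ≠ 0 := by positivity
    have : c • (1 : Matrix (Fin n) (Fin n) ℝ) - Matrix.vecMulVec w w =
        c • (1 + Matrix.replicateCol Unit (-(c⁻¹ • w)) * Matrix.replicateRow Unit w) := by
      rw [← Matrix.vecMulVec_eq, Matrix.neg_vecMulVec, Matrix.smul_vecMulVec, smul_add, smul_neg,
        smul_smul, mul_inv_cancel₀ hc0, one_smul, sub_eq_add_neg]
    rw [this, Matrix.det_smul, Matrix.det_one_add_replicateCol_mul_replicateRow]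
    simp only [Fintype.card_fin, dotProduct_neg, dotProduct_smul, smul_eq_mul]
    obtain ⟨m, rfl⟩ : ∃ m, n = m + 1 := ⟨n - 1, by omega⟩
    have h2 : w ⬝ᵥ w = c - 1 := by rw [hc]; ring
    rw [h2, Nat.add_sub_cancel, pow_succ]
    field_simp
    ring

theorem aux_A {n : ℕ} (hn : 1 ≤ n) (A : Matrix (Fin n) (Fin n) ℝ) (hA : A.PosDef)
    (hd : A.det = 1) (w : Fin n → ℝ) :
    ∃ B : Matrix (Fin n) (Fin n) ℝ, B.PosDef ∧ B.det = 1 ∧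
      ∀ x : Fin n → ℝ, ((1 + w ⬝ᵥ w) ^ (((n : ℝ) - 1) / n)) * ((B⁻¹ *ᵥ x) ⬝ᵥ (B⁻¹ *ᵥ x)) =
        (1 + w ⬝ᵥ w) * ((A⁻¹ *ᵥ x) ⬝ᵥ (A⁻¹ *ᵥ x)) - (w ⬝ᵥ (A⁻¹ *ᵥ x)) ^ 2 := by
  have hw : 0 ≤ w ⬝ᵥ w := by
    simp only [dotProduct]; exact Finset.sum_nonneg fun i _ => mul_self_nonneg _
  obtain ⟨hQ, hQd, hQf⟩ := aux_Q hn w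
  set Q := (1 + w ⬝ᵥ w) • (1 : Matrix (Fin n) (Fin n) ℝ) - Matrix.vecMulVec w w
  set c := (1 + w ⬝ᵥ w) ^ (((n : ℝ) - 1) / n) with hc
  have hcpos : 0 < c := by positivity
  have hAs : A⁻¹ᵀ = A⁻¹ := by
    have := hA.inv.isHermitian.eq
    rwa [Matrix.conjTranspose_eq_transpose_of_trivial] at this
  have hAd : (A⁻¹).det = 1 := by rw [Matrix.det_nonsing_inv, hd]; simp
  have hM : (c⁻¹ • (A⁻¹ * Q * A⁻¹)).PosDef := by
    refine Matrix.PosDef.smul ?_ (inv_pos.2 hcpos)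
    have := hQ.conjTranspose_mul_mul_same (B := A⁻¹)
      (Matrix.mulVec_injective_of_isUnit hA.inv.isUnit)
    rwa [hA.inv.isHermitian.eq] at this
  obtain ⟨B, hB, hBd, hBf⟩ := aux_sqrt _ hM (by
    rw [Matrix.det_smul, Matrix.det_mul, Matrix.det_mul, hAd, hQd, Fintype.card_fin, hc,
      ← Real.rpow_natCast, ← Real.rpow_natCast, ← Real.rpow_neg (by positivity),
      ← Real.rpow_mul (by positivity), one_mul, mul_one, ← Real.rpow_add (by positivity)]
    have : -(((n:ℝ) - 1) / n) * n + ((n - 1 : ℕ) : ℝ) = 0 := by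
      have : (n:ℝ) ≠ 0 := by positivity
      push_cast [hn]
      field_simp
      ring
    rw [this, Real.rpow_zero])
  refine ⟨B, hB, hBd, fun x => ?_⟩
  rw [hBf, ← hQf, Matrix.smul_mulVec, dotProduct_smul, smul_eq_mul, ← mul_assoc,
    mul_inv_cancel₀ hcpos.ne', one_mul, ← Matrix.mulVec_mulVec, ← Matrix.mulVec_mulVec,
    Matrix.dotProduct_mulVec, ← Matrix.mulVec_transpose, hAs]

end MatrixPart

section AnalyticPart

noncomputable def Nf {n : ℕ} (w z : EuclideanSpace ℝ (Fin n)) : ℝ :=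
  (1 + ‖w‖ ^ 2) * ‖z‖ ^ 2 - (inner ℝ w z) ^ 2

def Sh (n : ℕ) : Set (EuclideanSpace ℝ (Fin n)) := {ω | 1 ≤ ‖ω‖ ∧ ‖ω‖ ≤ 2}

theorem Sh_meas (n : ℕ) : MeasurableSet (Sh n) :=
  (measurableSet_le measurable_const measurable_norm).inter
    (measurableSet_le measurable_norm measurable_const)

theorem Sh_fin (n : ℕ) : volume (Sh n) < ⊤ := by
  refine lt_of_le_of_lt (measure_mono ?_)
    (measure_closedBall_lt_top (x := (0 : EuclideanSpace ℝ (Fin n))) (r := 2))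
  intro ω h
  simpa using h.2

theorem Nf_ge {n : ℕ} (w z : EuclideanSpace ℝ (Fin n)) : ‖z‖ ^ 2 ≤ Nf w z := by
  unfold Nf
  have h := abs_real_inner_le_norm w z
  have h2 : (inner ℝ w z) ^ 2 ≤ (‖w‖ * ‖z‖) ^ 2 := by
    rw [← sq_abs]; gcongr
  nlinarith

theorem Nf_cont {n : ℕ} : Continuous fun q : EuclideanSpace ℝ (Fin n) × EuclideanSpace ℝ (Fin n) =>
    Nf q.1 q.2 := by
  unfold Nf; fun_prop

theorem Nf_smul {n : ℕ} (w z : EuclideanSpace ℝ (Fin n)) (r : ℝ) :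
    Nf w (r • z) = r ^ 2 * Nf w z := by
  unfold Nf
  rw [norm_smul, inner_smul_right, mul_pow, Real.norm_eq_abs, sq_abs]; ring

theorem Nf_isom {n : ℕ} (f : EuclideanSpace ℝ (Fin n) ≃ₗᵢ[ℝ] EuclideanSpace ℝ (Fin n))
    (w z : EuclideanSpace ℝ (Fin n)) : Nf (f w) (f z) = Nf w z := by
  unfold Nf; simp

theorem cst_rot {n : ℕ} (p t : ℝ) (e e' : EuclideanSpace ℝ (Fin n)) (h : ‖e'‖ = ‖e‖) :
    ∫ ω in Sh n, 1 / Nf (t • ω) e' ^ (p / 2) = ∫ ω in Sh n, 1 / Nf (t • ω) e ^ (p / 2) := by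
  let f := Submodule.reflection (Submodule.span ℝ {e' - e})ᗮ
  have hf : f e' = e := Submodule.reflection_sub h
  have hpre : f ⁻¹' (Sh n) = Sh n := by
    ext ω; simp [Sh]
  have := f.measurePreserving.setIntegral_preimage_emb f.toHomeomorph.measurableEmbedding
    (fun ω => 1 / Nf (t • ω) e ^ (p / 2)) (Sh n)
  rw [← this, hpre]
  refine integral_congr_ae (Eventually.of_forall fun ω => ?_)
  simp only
  rw [← hf, ← map_smul, Nf_isom]

theorem cst_eq {n : ℕ} (p t : ℝ) (hp : 0 < p) (e z : EuclideanSpace ℝ (Fin n)) (he : ‖e‖ = 1) :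
    ∫ ω in Sh n, 1 / Nf (t • ω) z ^ (p / 2) =
      (∫ ω in Sh n, 1 / Nf (t • ω) e ^ (p / 2)) / ‖z‖ ^ p := by
  by_cases hz : z = 0
  · subst hz
    have h0 : ∀ w : EuclideanSpace ℝ (Fin n), Nf w 0 = 0 := by intro w; simp [Nf]
    simp [h0, Real.zero_rpow hp.ne', Real.zero_rpow (half_pos hp).ne']
  · have hz' : 0 < ‖z‖ := norm_pos_iff.2 hz
    rw [← cst_rot p t e (‖z‖⁻¹ • z) (by rw [norm_smul, he]; simp [hz'.ne']), ← integral_div]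
    refine integral_congr_ae (Eventually.of_forall fun ω => ?_)
    simp only
    rw [Nf_smul, Real.mul_rpow (by positivity) ((sq_nonneg _).trans (Nf_ge _ _)),
      ← Real.rpow_natCast, ← Real.rpow_mul (by positivity), Real.inv_rpow (by positivity)]
    have : ((2 : ℕ) : ℝ) * (p / 2) = p := by push_cast; ring
    rw [this]
    have : ‖z‖ ^ p ≠ 0 := by positivity
    field_simp

theorem cst_int {n : ℕ} (p t : ℝ) (hp : 0 < p) (e : EuclideanSpace ℝ (Fin n)) (he : ‖e‖ = 1) :
    IntegrableOn (fun ω => 1 / Nf (t • ω) e ^ (p / 2)) (Sh n) := by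
  have hge : ∀ ω, 1 ≤ Nf (t • ω) e := fun ω => by simpa [he] using Nf_ge (t • ω) e
  have hc : Continuous fun ω : EuclideanSpace ℝ (Fin n) => 1 / Nf (t • ω) e ^ (p / 2) := by
    have h1 : Continuous fun ω : EuclideanSpace ℝ (Fin n) => Nf (t • ω) e := by
      unfold Nf; fun_prop
    refine continuous_const.div (h1.rpow_const fun ω => Or.inl ?_) fun ω => ?_
    · linarith [hge ω]
    · have := hge ω; positivity
  refine Measure.integrableOn_of_bounded (M := 1) (Sh_fin n).ne hc.aestronglyMeasurable
    (Eventually.of_forall fun ω => ?_)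
  have h1 : 1 ≤ Nf (t • ω) e ^ (p / 2) := Real.one_le_rpow (hge ω) (by positivity)
  rw [Real.norm_eq_abs, abs_of_nonneg (by positivity)]
  exact div_le_one_of_le₀ h1 (by positivity)

theorem cst_lower (m : ℕ) (p : ℝ) (hp : 0 < p) :
    ∃ κ : ℝ, 0 < κ ∧ ∀ t : ℝ, 1 ≤ t →
      κ / t ^ m ≤ ∫ ω in Sh (m + 1), 1 / Nf (t • ω) (EuclideanSpace.single 0 1) ^ (p / 2) := by
  refine ⟨(1 / 2) * (2 / (m + 1)) ^ m * (1 / 2 ^ (p / 2)), by positivity, fun t ht => ?_⟩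
  have ht0 : 0 < t := by linarith
  set e : EuclideanSpace ℝ (Fin (m + 1)) := EuclideanSpace.single 0 1 with he
  have he1 : ‖e‖ = 1 := by simp [he]
  set ρ : ℝ := 1 / (t * (m + 1)) with hρ
  have hρ0 : 0 < ρ := by positivity
  have hmρ : (m : ℝ) * (t * ρ) ^ 2 ≤ 1 := by
    have : t * ρ = 1 / (m + 1) := by rw [hρ]; field_simp
    rw [this, div_pow, one_pow, mul_one_div, div_le_one (by positivity)]
    nlinarith [(Nat.cast_nonneg m : (0 : ℝ) ≤ m)]
  set a : Fin (m + 1) → ℝ := Fin.cons 1 (fun _ => -ρ) with ha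
  set b : Fin (m + 1) → ℝ := Fin.cons (3 / 2) (fun _ => ρ) with hb
  have hab : a ≤ b := by
    intro i
    refine Fin.cases ?_ (fun j => ?_) i
    · simp [ha, hb]; norm_num
    · simp [ha, hb, hρ0.le]
  set Bx : Set (EuclideanSpace ℝ (Fin (m + 1))) := WithLp.ofLp ⁻¹' (Set.Icc a b) with hBx
  have hvol : volume.real Bx = (1 / 2) * (2 * ρ) ^ m := by
    rw [Measure.real, hBx, (PiLp.volume_preserving_ofLp (Fin (m + 1))).measure_preimage
      measurableSet_Icc.nullMeasurableSet, Real.volume_Icc_pi_toReal hab, Fin.prod_univ_succ]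
    simp [ha, hb]
    rw [← two_mul]; norm_num
  have hBm : MeasurableSet Bx :=
    measurableSet_Icc.preimage (PiLp.volume_preserving_ofLp (Fin (m + 1))).measurable
  have hfacts : ∀ ω ∈ Bx, ω ∈ Sh (m + 1) ∧ Nf (t • ω) e ≤ 2 := by
    intro ω hω
    have h0 : 1 ≤ ω 0 ∧ ω 0 ≤ 3 / 2 := ⟨by simpa [ha] using hω.1 0, by simpa [hb] using hω.2 0⟩
    have hs : ∀ i : Fin m, (ω i.succ) ^ 2 ≤ ρ ^ 2 := fun i => by
      have h1 : -ρ ≤ ω i.succ := by simpa [ha] using hω.1 i.succ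
      have h2 : ω i.succ ≤ ρ := by simpa [hb] using hω.2 i.succ
      nlinarith
    have hnorm : ‖ω‖ ^ 2 = (ω 0) ^ 2 + ∑ i : Fin m, (ω i.succ) ^ 2 := by
      rw [EuclideanSpace.norm_sq_eq, Fin.sum_univ_succ]; simp
    have hsum : ∑ i : Fin m, (ω i.succ) ^ 2 ≤ m * ρ ^ 2 := by
      refine (Finset.sum_le_sum fun i _ => hs i).trans ?_
      simp
    have hsum0 : 0 ≤ ∑ i : Fin m, (ω i.succ) ^ 2 := Finset.sum_nonneg fun i _ => sq_nonneg _
    have ht2 : t ^ 2 * (m * ρ ^ 2) ≤ 1 := by linarith [hmρ, mul_pow t ρ 2]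
    have hmr : m * ρ ^ 2 ≤ 1 := by
      have : 0 ≤ m * ρ ^ 2 := by positivity
      have : 1 ≤ t ^ 2 := one_le_pow₀ ht
      nlinarith
    refine ⟨⟨?_, ?_⟩, ?_⟩
    · nlinarith [norm_nonneg ω]
    · nlinarith [norm_nonneg ω]
    · have hin : inner ℝ (t • ω) e = t * ω 0 := by
        rw [inner_smul_left, he, EuclideanSpace.inner_single_right]; simp
      unfold Nf
      rw [hin, he1, norm_smul, mul_pow, hnorm, Real.norm_eq_abs, sq_abs]
      nlinarith
  have hge : ∀ ω, 1 ≤ Nf (t • ω) e := fun ω => by simpa [he1] using Nf_ge (t • ω) e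
  calc _ = volume.real Bx * (1 / 2 ^ (p / 2)) := by
        rw [hvol, hρ, show 2 * (1 / (t * ((m : ℝ) + 1))) = (2 / (m + 1)) / t by field_simp, div_pow]
        ring
    _ = ∫ ω in Bx, (1 / 2 ^ (p / 2) : ℝ) := by rw [setIntegral_const, smul_eq_mul]
    _ ≤ ∫ ω in Bx, 1 / Nf (t • ω) e ^ (p / 2) := by
        have hsub : Bx ⊆ Sh (m + 1) := fun ω h => (hfacts ω h).1
        refine setIntegral_mono_on ?_ ((cst_int p t hp e he1).mono_set hsub) hBm ?_
        · exact integrableOn_const ((measure_mono hsub).trans_lt (Sh_fin _)).ne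
        · intro ω hω
          have h1 := hge ω
          have h2 := (hfacts ω hω).2
          gcongr
    _ ≤ _ := by
        refine setIntegral_mono_set (cst_int p t hp e he1) (Eventually.of_forall fun ω => ?_)
          (Eventually.of_forall fun ω h => (hfacts ω h).1)
        have h1 := hge ω
        simp only [Pi.zero_apply]
        positivity

noncomputable def Ai {n : ℕ} (A : Matrix (Fin n) (Fin n) ℝ) (y : EuclideanSpace ℝ (Fin n)) :
    EuclideanSpace ℝ (Fin n) :=
  (EuclideanSpace.equiv (Fin n) ℝ).symm (A⁻¹.mulVec (EuclideanSpace.equiv (Fin n) ℝ y))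

theorem Ai_cont {n : ℕ} (A : Matrix (Fin n) (Fin n) ℝ) : Continuous (Ai A) := by
  unfold Ai
  refine (EuclideanSpace.equiv (Fin n) ℝ).symm.continuous.comp ?_
  exact Continuous.matrix_mulVec continuous_const (EuclideanSpace.equiv (Fin n) ℝ).continuous

theorem norm_sq_dot {n : ℕ} (z : EuclideanSpace ℝ (Fin n)) :
    ‖z‖ ^ 2 = dotProduct z.ofLp z.ofLp := by
  rw [EuclideanSpace.norm_sq_eq]; simp [dotProduct, sq]

theorem inner_dot {n : ℕ} (w z : EuclideanSpace ℝ (Fin n)) :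
    inner ℝ w z = dotProduct w.ofLp z.ofLp := by
  rw [PiLp.inner_apply]; simp [dotProduct, mul_comm]

theorem aux_B {n : ℕ} (hn : 1 ≤ n) (A : Matrix (Fin n) (Fin n) ℝ) (hA : A.PosDef)
    (hd : A.det = 1) (w : EuclideanSpace ℝ (Fin n)) :
    ∃ B : Matrix (Fin n) (Fin n) ℝ, B.PosDef ∧ B.det = 1 ∧
      ∀ y, Nf w (Ai A y) = ((1 + ‖w‖ ^ 2) ^ (((n : ℝ) - 1) / n)) * ‖Ai B y‖ ^ 2 := by
  obtain ⟨B, hB, hBd, hBf⟩ := aux_A hn A hA hd w.ofLp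
  refine ⟨B, hB, hBd, fun y => ?_⟩
  unfold Nf
  rw [norm_sq_dot, norm_sq_dot, norm_sq_dot, inner_dot]
  exact (hBf y.ofLp).symm

theorem J_lower {n : ℕ} (hn : 1 ≤ n) (s C : ℝ) (hs : 0 < s) (hC : 0 ≤ C)
    (v : EuclideanSpace ℝ (Fin n) → ℝ) (x : EuclideanSpace ℝ (Fin n))
    (hbd : ∀ A : Matrix (Fin n) (Fin n) ℝ, A.PosDef → A.det = 1 → -C ≤ LA s A v x)
    (A : Matrix (Fin n) (Fin n) ℝ) (hA : A.PosDef) (hd : A.det = 1)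
    (t : ℝ) (ht : 1 ≤ t) (ω : EuclideanSpace ℝ (Fin n)) (hω : 1 ≤ ‖ω‖) :
    -(2 * C / t ^ ((((n : ℝ) - 1) / n) * ((n : ℝ) + 2 * s))) ≤
      ∫ y, delta2 v x y / Nf (t • ω) (Ai A y) ^ (((n : ℝ) + 2 * s) / 2) := by
  obtain ⟨B, hB, hBd, hBf⟩ := aux_B hn A hA hd (t • ω)
  have hn' : (1 : ℝ) ≤ n := by exact_mod_cast hn
  set p := (n : ℝ) + 2 * s with hp
  set q := ((n : ℝ) - 1) / n with hq
  have hq0 : 0 ≤ q := div_nonneg (by linarith) (by linarith)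
  have hp0 : 0 < p := by positivity
  have ht0 : 0 < t := by linarith
  set D := ((1 + ‖t • ω‖ ^ 2) ^ q) ^ (p / 2) with hD
  have hDpos : 0 < D := by positivity
  have h1 : ∀ y, delta2 v x y / Nf (t • ω) (Ai A y) ^ (p / 2) = D⁻¹ * kernelA s B v x y := by
    intro y
    rw [hBf, Real.mul_rpow (by positivity) (by positivity), ← Real.rpow_natCast ‖Ai B y‖,
      ← Real.rpow_mul (norm_nonneg _), show ((2 : ℕ) : ℝ) * (p / 2) = p by push_cast; ring]
    unfold kernelA
    rw [← hD, div_mul_eq_div_div, div_right_comm, div_eq_inv_mul _ D]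
    rfl
  have hDge : t ^ (q * p) ≤ D := by
    have : t ^ (q * p) = ((t ^ 2) ^ q) ^ (p / 2) := by
      rw [← Real.rpow_natCast t 2, ← Real.rpow_mul ht0.le, ← Real.rpow_mul ht0.le]
      congr 1; push_cast; ring
    rw [this, hD]
    have h2 : t ^ 2 ≤ 1 + ‖t • ω‖ ^ 2 := by
      rw [norm_smul, mul_pow, Real.norm_eq_abs, sq_abs]
      have : 1 ≤ ‖ω‖ ^ 2 := one_le_pow₀ hω
      nlinarith [sq_nonneg t]
    gcongr
  simp_rw [h1]
  rw [integral_const_mul]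
  have hL := hbd B hB hBd
  unfold LA at hL
  have h3 : -(2 * C) ≤ ∫ y, kernelA s B v x y := by linarith
  calc -(2 * C / t ^ (q * p)) ≤ -(2 * C / D) := by
        have : 0 < t ^ (q * p) := by positivity
        gcongr
    _ = D⁻¹ * (-(2 * C)) := by ring
    _ ≤ _ := by gcongr

theorem LA_nonneg {m : ℕ} (hm : 1 ≤ m) (s C : ℝ) (hs : 0 < s) (hC : 0 ≤ C)
    (v : EuclideanSpace ℝ (Fin (m + 1)) → ℝ) (hv : Continuous v)
    (x : EuclideanSpace ℝ (Fin (m + 1)))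
    (hint : ∀ (A : Matrix (Fin (m + 1)) (Fin (m + 1)) ℝ),
      A.PosDef → A.det = 1 → Integrable (fun y => kernelA s A v x y))
    (hbd : ∀ A : Matrix (Fin (m + 1)) (Fin (m + 1)) ℝ, A.PosDef → A.det = 1 → -C ≤ LA s A v x)
    (A : Matrix (Fin (m + 1)) (Fin (m + 1)) ℝ) (hA : A.PosDef) (hd : A.det = 1) :
    0 ≤ LA s A v x := by
  set p := ((m + 1 : ℕ) : ℝ) + 2 * s with hp
  have hp0 : 0 < p := by positivity
  obtain ⟨κ, hκ, hκt⟩ := cst_lower m p hp0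
  set I := ∫ y, kernelA s A v x y with hI
  suffices h : 0 ≤ I by unfold LA; positivity
  by_contra hneg
  push Not at hneg
  set e : EuclideanSpace ℝ (Fin (m + 1)) := EuclideanSpace.single 0 1 with he
  have he1 : ‖e‖ = 1 := by simp [he]
  set V := volume.real (Sh (m + 1)) with hV
  have hkey : ∀ t : ℝ, 1 ≤ t →
      -(2 * C / t ^ (((((m + 1 : ℕ) : ℝ) - 1) / ((m + 1 : ℕ) : ℝ)) * p)) * V ≤
        (∫ ω in Sh (m + 1), 1 / Nf (t • ω) e ^ (p / 2)) * I := by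
    intro t ht
    have hdom : Integrable (fun z : EuclideanSpace ℝ (Fin (m + 1)) × EuclideanSpace ℝ (Fin (m + 1))
        => (1 : ℝ) * kernelA s A v x z.2) ((volume.restrict (Sh (m + 1))).prod volume) := by
      have h1 : Integrable (fun _ : EuclideanSpace ℝ (Fin (m + 1)) => (1 : ℝ))
        (volume.restrict (Sh (m + 1))) := integrableOn_const (Sh_fin _).ne
      exact Integrable.mul_prod h1 (hint A hA hd)
    have hprod : Integrable (Function.uncurry fun (ω y : EuclideanSpace ℝ (Fin (m + 1))) =>
        delta2 v x y / Nf (t • ω) (Ai A y) ^ (p / 2))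
        ((volume.restrict (Sh (m + 1))).prod volume) := by
      refine hdom.mono ?_ (Eventually.of_forall fun z => ?_)
      · apply Measurable.aestronglyMeasurable
        have h1 : Measurable fun z : EuclideanSpace ℝ (Fin (m + 1)) × EuclideanSpace ℝ (Fin (m + 1))
            => delta2 v x z.2 := by
          apply Continuous.measurable
          unfold delta2
          fun_prop
        have h2 : Measurable fun z : EuclideanSpace ℝ (Fin (m + 1)) × EuclideanSpace ℝ (Fin (m + 1))
            => Nf (t • z.1) (Ai A z.2) := by
          apply Continuous.measurable
          have := Ai_cont A
          unfold Nf
          fun_prop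
        exact h1.div (h2.pow_const _)
      · obtain ⟨ω, y⟩ := z
        simp only [Function.uncurry, one_mul]
        have hk : kernelA s A v x y = delta2 v x y / ‖Ai A y‖ ^ p := rfl
        have hge := Nf_ge (t • ω) (Ai A y)
        rw [hk, norm_div, norm_div]
        by_cases hy : Ai A y = 0
        · have h0 : Nf (t • ω) (Ai A y) = 0 := by rw [hy]; simp [Nf]
          rw [h0, hy]
          simp [Real.zero_rpow hp0.ne', Real.zero_rpow (half_pos hp0).ne']
        · have hy' : 0 < ‖Ai A y‖ := norm_pos_iff.2 hy
          have hN0 : 0 < Nf (t • ω) (Ai A y) := lt_of_lt_of_le (by positivity) hge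
          have : ‖Ai A y‖ ^ p ≤ Nf (t • ω) (Ai A y) ^ (p / 2) := by
            have h3 : ‖Ai A y‖ ^ p = (‖Ai A y‖ ^ 2) ^ (p / 2) := by
              rw [← Real.rpow_natCast _ 2, ← Real.rpow_mul hy'.le]
              congr 1; push_cast; ring
            rw [h3]; gcongr
          rw [Real.norm_of_nonneg (by positivity : 0 ≤ Nf (t • ω) (Ai A y) ^ (p / 2)),
            Real.norm_of_nonneg (by positivity : 0 ≤ ‖Ai A y‖ ^ p)]
          gcongr
    have hswap := integral_integral_swap hprod
    have hR : ∫ y, ∫ ω in Sh (m + 1), delta2 v x y / Nf (t • ω) (Ai A y) ^ (p / 2) =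
        (∫ ω in Sh (m + 1), 1 / Nf (t • ω) e ^ (p / 2)) * I := by
      rw [hI, ← integral_const_mul]
      refine integral_congr_ae (Eventually.of_forall fun y => ?_)
      have hk : kernelA s A v x y = delta2 v x y / ‖Ai A y‖ ^ p := rfl
      simp only
      rw [hk]
      have hd1 : ∀ ω : EuclideanSpace ℝ (Fin (m + 1)),
          delta2 v x y / Nf (t • ω) (Ai A y) ^ (p / 2) =
          delta2 v x y * (1 / Nf (t • ω) (Ai A y) ^ (p / 2)) := fun ω => div_eq_mul_one_div _ _
      rw [integral_congr_ae (Eventually.of_forall hd1), integral_const_mul, cst_eq p t hp0 e _ he1]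
      ring
    rw [← hR, ← hswap, mul_comm, ← smul_eq_mul, hV, ← setIntegral_const]
    refine setIntegral_mono_on (integrableOn_const (Sh_fin _).ne) hprod.integral_prod_left
      (Sh_meas _) fun ω hω => ?_
    exact J_lower (by omega) s C hs hC v x hbd A hA hd t ht ω hω.1
  set ε := 2 * s * m / (m + 1) with hε
  have hm' : (1 : ℝ) ≤ m := by exact_mod_cast hm
  have hε0 : 0 < ε := by positivity
  have hfin : ∀ t : ℝ, 1 ≤ t → t ^ ε ≤ 2 * C * V / (κ * (-I)) := by
    intro t ht
    have ht0 : 0 < t := by linarith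
    have h1 := hkey t ht
    have h2 := hκt t ht
    have hexp : ((((m + 1 : ℕ) : ℝ) - 1) / ((m + 1 : ℕ) : ℝ)) * p = m + ε := by
      rw [hp, hε]; push_cast; field_simp; ring
    rw [hexp, Real.rpow_add ht0, Real.rpow_natCast] at h1
    rw [le_div_iff₀ (mul_pos hκ (by linarith))]
    have h3 : κ / t ^ m * (-I) ≤ 2 * C / (t ^ m * t ^ ε) * V := by
      have := mul_le_mul_of_nonneg_right h2 (by linarith : 0 ≤ -I)
      linarith
    have hte : 0 < t ^ ε := by positivity
    have h4 := mul_le_mul_of_nonneg_right h3 (by positivity : 0 ≤ t ^ m * t ^ ε)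
    have h5 : κ / t ^ m * (-I) * (t ^ m * t ^ ε) = t ^ ε * (κ * (-I)) := by field_simp
    have h6 : 2 * C / (t ^ m * t ^ ε) * V * (t ^ m * t ^ ε) = 2 * C * V := by field_simp
    linarith
  obtain ⟨t, ht1, ht2⟩ := (((tendsto_rpow_atTop hε0).eventually_gt_atTop
    (2 * C * V / (κ * (-I)))).and (eventually_ge_atTop 1)).exists
  exact absurd (hfin t ht2) (not_le.2 ht1)

end AnalyticPart

theorem fin_one_det (A : Matrix (Fin 1) (Fin 1) ℝ) (h : A.det = 1) : A = 1 := by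
  ext i j
  rw [Subsingleton.elim i 0, Subsingleton.elim j 0]
  simpa using h

theorem exists_max_pt {n : ℕ} (Lφ M θ : ℝ) (hM : Lφ < M) (hθ : 0 < θ)
    (φ v : EuclideanSpace ℝ (Fin n) → ℝ) (hv : Continuous v)
    (hφLip : ∀ a b : EuclideanSpace ℝ (Fin n), |φ a - φ b| ≤ Lφ * ‖a - b‖)
    (hlim : Tendsto (fun x => v x - φ x) (cocompact (EuclideanSpace ℝ (Fin n))) (nhds 0))
    (a b : EuclideanSpace ℝ (Fin n)) (hab : θ ≤ v a - v b - M * ‖a - b‖) :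
    ∃ x₀ y₀ : EuclideanSpace ℝ (Fin n), θ ≤ v x₀ - v y₀ - M * ‖x₀ - y₀‖ ∧
      ∀ x y, v x - v y - M * ‖x - y‖ ≤ v x₀ - v y₀ - M * ‖x₀ - y₀‖ := by
  have hφc : Continuous φ := by
    have : LipschitzWith (Real.toNNReal Lφ) φ := by
      refine LipschitzWith.of_dist_le_mul fun x y => ?_
      rw [Real.dist_eq, dist_eq_norm]
      refine (hφLip x y).trans ?_
      gcongr
      exact Real.le_coe_toNNReal _
    exact this.continuous
  have hev : ∀ᶠ x in cocompact (EuclideanSpace ℝ (Fin n)), |v x - φ x| < θ / 4 := by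
    have := hlim.eventually (Metric.ball_mem_nhds 0 (by positivity : 0 < θ / 4))
    filter_upwards [this] with x hx
    simpa [Metric.mem_ball, Real.dist_eq] using hx
  obtain ⟨K, hK, hKs⟩ := mem_cocompact.1 hev
  obtain ⟨R, hR⟩ := hK.isBounded.exists_norm_le
  obtain ⟨B, hB⟩ := hK.exists_bound_of_continuousOn (hv.sub hφc).continuousOn
  set B' := max B (θ / 4) with hB'
  have hout : ∀ x, R < ‖x‖ → |v x - φ x| < θ / 4 := fun x hx =>
    hKs fun h => absurd (hR x h) (not_le.2 hx)
  have hbd : ∀ x, |v x - φ x| ≤ B' := fun x => by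
    by_cases h : x ∈ K
    · exact (hB x h).trans (le_max_left _ _)
    · exact (hKs h).le.trans (le_max_right _ _)
  set d := 2 * B' / (M - Lφ) with hd
  have hcon : ∀ x y, θ ≤ v x - v y - M * ‖x - y‖ → ‖x‖ ≤ R + d ∧ ‖y‖ ≤ R + d := by
    intro x y hxy
    have h1 := abs_le.1 (hφLip x y)
    have h2 := abs_le.1 (hbd x)
    have h3 := abs_le.1 (hbd y)
    have h4 : ‖x - y‖ ≤ d := by
      rw [hd, le_div_iff₀ (by linarith)]
      nlinarith
    have h0 := norm_nonneg (x - y)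
    have h5 : ‖x‖ ≤ R ∨ ‖y‖ ≤ R := by
      by_contra hh
      push Not at hh
      have h6 := abs_lt.1 (hout x hh.1)
      have h7 := abs_lt.1 (hout y hh.2)
      nlinarith
    have h8 : ‖x‖ ≤ ‖y‖ + ‖x - y‖ := by
      have := norm_add_le y (x - y); simpa using this
    have h9 : ‖y‖ ≤ ‖x‖ + ‖x - y‖ := by
      have := norm_sub_le x (x - y); simpa using this
    rcases h5 with h | h <;> constructor <;> linarith
  set S := Metric.closedBall (0 : EuclideanSpace ℝ (Fin n)) (R + d) ×ˢ
    Metric.closedBall (0 : EuclideanSpace ℝ (Fin n)) (R + d) with hS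
  have hmemS : ∀ x y, θ ≤ v x - v y - M * ‖x - y‖ → (x, y) ∈ S := fun x y h => by
    have := hcon x y h
    simpa [hS] using this
  have hSc : IsCompact S := (isCompact_closedBall _ _).prod (isCompact_closedBall _ _)
  obtain ⟨q, hqS, hq⟩ := hSc.exists_isMaxOn ⟨(a, b), hmemS a b hab⟩
    (f := fun q : EuclideanSpace ℝ (Fin n) × EuclideanSpace ℝ (Fin n) =>
      v q.1 - v q.2 - M * ‖q.1 - q.2‖) (by fun_prop)
  have hmax := isMaxOn_iff.1 hq
  have hθq : θ ≤ v q.1 - v q.2 - M * ‖q.1 - q.2‖ := hab.trans (hmax (a, b) (hmemS a b hab))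
  refine ⟨q.1, q.2, hθq, fun x y => ?_⟩
  by_cases h : θ ≤ v x - v y - M * ‖x - y‖
  · exact hmax (x, y) (hmemS x y h)
  · exact (not_le.1 h).le.trans hθq

theorem stmt16 (n : ℕ) (hn : 1 ≤ n) (s μ Lg Lφ : ℝ) (hs : 1 / 2 < s) (hs1 : s < 1) (hμ : 0 < μ)
    (g : EuclideanSpace ℝ (Fin n) × ℝ → ℝ)
    (hgLip : ∀ (x y : EuclideanSpace ℝ (Fin n)) (t : ℝ), |g (x, t) - g (y, t)| ≤ Lg * ‖x - y‖)
    (hgmono : ∀ (x : EuclideanSpace ℝ (Fin n)) (t₁ t₂ : ℝ), t₂ ≤ t₁ →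
      μ * (t₁ - t₂) ≤ g (x, t₁) - g (x, t₂))
    (φ : EuclideanSpace ℝ (Fin n) → ℝ)
    (hφLip : ∀ a b : EuclideanSpace ℝ (Fin n), |φ a - φ b| ≤ Lφ * ‖a - b‖)
    (v : EuclideanSpace ℝ (Fin n) → ℝ) (hv : Continuous v)
    (hintv : ∀ (x : EuclideanSpace ℝ (Fin n)) (A : Matrix (Fin n) (Fin n) ℝ),
      A.PosDef → A.det = 1 → Integrable (fun y => kernelA s A v x y))
    (heq : ∀ x : EuclideanSpace ℝ (Fin n),
      sInf {z : ℝ | ∃ A : Matrix (Fin n) (Fin n) ℝ, A.PosDef ∧ A.det = 1 ∧ z = LA s A v x} =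
        g (x, v x))
    (hlim : Tendsto (fun x => v x - φ x) (cocompact (EuclideanSpace ℝ (Fin n))) (nhds 0)) :
    ∀ x y : EuclideanSpace ℝ (Fin n), |v x - v y| ≤ max (Lg / μ) Lφ * ‖x - y‖ := by
  have hLφ : 0 ≤ Lφ := by
    have h := hφLip (EuclideanSpace.single ⟨0, hn⟩ 1) 0
    have h2 := (abs_nonneg _).trans h
    simpa using h2
  have core : ∀ M, max (Lg / μ) Lφ < M → ∀ a b, v a - v b ≤ M * ‖a - b‖ := by
    intro M hM a b
    by_contra hcon
    push Not at hcon
    obtain ⟨x, y, hθ, hmax⟩ := exists_max_pt Lφ M (v a - v b - M * ‖a - b‖)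
      ((le_max_right _ _).trans_lt hM) (by linarith) φ v hv hφLip hlim a b le_rfl
    have hpos : 0 < v x - v y - M * ‖x - y‖ := by linarith
    have hM0 : 0 ≤ M := hLφ.trans ((le_max_right _ _).trans hM.le)
    have hvxy : v y ≤ v x := by nlinarith [mul_nonneg hM0 (norm_nonneg (x - y))]
    have hdelta : ∀ z, delta2 v x z ≤ delta2 v y z := by
      intro z
      have h1 := hmax (x + z) (y + z)
      have h2 := hmax (x - z) (y - z)
      rw [add_sub_add_right_eq_sub] at h1
      rw [sub_sub_sub_cancel_right] at h2
      unfold delta2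
      linarith
    have hLA : ∀ A : Matrix (Fin n) (Fin n) ℝ, A.PosDef → A.det = 1 → LA s A v x ≤ LA s A v y := by
      intro A hA hd
      unfold LA
      refine mul_le_mul_of_nonneg_left ?_ (by norm_num)
      refine integral_mono (hintv x A hA hd) (hintv y A hA hd) fun z => ?_
      unfold kernelA
      exact div_le_div_of_nonneg_right (hdelta z) (by positivity)
    have hgle : g (x, v x) ≤ g (y, v y) := by
      rw [← heq x, ← heq y]
      have hne : ∀ x, {z : ℝ | ∃ A : Matrix (Fin n) (Fin n) ℝ, A.PosDef ∧ A.det = 1 ∧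
          z = LA s A v x}.Nonempty := fun x => ⟨_, 1, Matrix.PosDef.one, Matrix.det_one, rfl⟩
      by_cases hbx : BddBelow {z : ℝ | ∃ A : Matrix (Fin n) (Fin n) ℝ, A.PosDef ∧ A.det = 1 ∧
          z = LA s A v x}
      · refine le_csInf (hne y) ?_
        rintro z ⟨A, hA, hd, rfl⟩
        exact (csInf_le hbx ⟨A, hA, hd, rfl⟩).trans (hLA A hA hd)
      · rw [Real.sInf_of_not_bddBelow hbx]
        by_cases hby : BddBelow {z : ℝ | ∃ A : Matrix (Fin n) (Fin n) ℝ, A.PosDef ∧ A.det = 1 ∧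
          z = LA s A v y}
        · refine Real.sInf_nonneg ?_
          rintro z ⟨A, hA, hd, rfl⟩
          obtain ⟨m, rfl⟩ : ∃ m, n = m + 1 := ⟨n - 1, by omega⟩
          obtain ⟨c, hc⟩ := hby
          rcases Nat.eq_zero_or_pos m with rfl | hm
          · exfalso
            refine hbx ⟨LA s 1 v x, ?_⟩
            rintro z ⟨A', hA', hd', rfl⟩
            have : A' = 1 := fin_one_det A' hd'
            rw [this]
          · refine LA_nonneg hm s |c| (by linarith) (abs_nonneg c) v hv y (hintv y) ?_ A hA hd
            intro A' hA' hd'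
            exact (neg_abs_le c).trans (hc ⟨A', hA', hd', rfl⟩)
        · rw [Real.sInf_of_not_bddBelow hby]
    have h1 := hgmono x (v x) (v y) hvxy
    have h2 := (abs_le.1 (hgLip x y (v y))).1
    have h3 : μ * (v x - v y) ≤ Lg * ‖x - y‖ := by linarith
    have h4 : Lg / μ ≤ M := (le_max_left _ _).trans hM.le
    have h5 : Lg ≤ M * μ := (div_le_iff₀ hμ).1 h4
    have h6 : Lg * ‖x - y‖ ≤ M * μ * ‖x - y‖ := mul_le_mul_of_nonneg_right h5 (norm_nonneg _)
    nlinarith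
  have core2 : ∀ a b, v a - v b ≤ max (Lg / μ) Lφ * ‖a - b‖ := by
    intro a b
    refine le_of_forall_pos_le_add fun ε hε => ?_
    have h := core (max (Lg / μ) Lφ + ε / (‖a - b‖ + 1)) (by
      have : 0 < ε / (‖a - b‖ + 1) := by positivity
      linarith) a b
    have h2 : ε / (‖a - b‖ + 1) * ‖a - b‖ ≤ ε := by
      rw [div_mul_eq_mul_div, div_le_iff₀ (by positivity)]
      nlinarith
    linarith [add_mul (max (Lg / μ) Lφ) (ε / (‖a - b‖ + 1)) ‖a - b‖]
  intro x y
  rw [abs_le]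
  constructor
  · have := core2 y x
    rw [norm_sub_rev] at this
    linarith
  · exact core2 x y
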